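/- For every integer d ≥ 2 and every real λ, ∫_{-1}^{1} exp(λ·t) · c_d·(1-t²)^{(d-3)/2} dt ≤ exp(λ²/(2d)). Consequently, if Z and Z' are independent uniform random points on the unit sphere S^{d-1} ⊂ ℝ^d, then E[exp(λ·⟨Z,Z'⟩)] ≤ exp(λ²/(2d)); i.e., ⟨Z,Z'⟩ is sub-Gaussian with parameter 1/√d. -/

import Mathlib

/-!
Integrating `((1 - t²) f_δ(t))' = -(δ - 1) t f_δ(t)` by parts against `t ^ (n + 1)` gives the moment
recurrence `(n + δ) m_{n+2} = (n + 1) m_n`. The centred Gaussian of variance `1/δ` satisfies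
`δ g_{n+2} = (n + 1) g_n`, so each even moment of `f_δ` is at most the corresponding Gaussian one,
while the odd moments vanish by symmetry. Comparing the power series of the two moment generating
functions term by term gives the bound `exp (l² / (2δ))`.
-/

open MeasureTheory ProbabilityTheory
open scoped RealInnerProductSpace

/-- The density of one coordinate of a uniform random point on `S^{d-1}`:
`f_d(t) = c_d * (1 - t²)^{(d-3)/2}` with `c_d = Γ(d/2)/(√π * Γ((d-1)/2))`. -/
noncomputable def sphereCoordDensity (d : ℕ) (t : ℝ) : ℝ :=
  (Real.Gamma ((d : ℝ) / 2) / (Real.sqrt Real.pi * Real.Gamma (((d : ℝ) - 1) / 2))) *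
    (1 - t ^ 2) ^ (((d : ℝ) - 3) / 2)

open Real Set
open scoped Nat NNReal

section GaussianMoments

variable {Ω : Type*} [MeasurableSpace Ω] {μ : Measure Ω} {X : Ω → ℝ}

lemma hasSum_exp (x : ℝ) : HasSum (fun n : ℕ ↦ x ^ n / n !) (exp x) := by
  rw [exp_eq_exp_ℝ]
  exact NormedSpace.expSeries_div_hasSum_exp x

lemma hasSum_mgf (hX : ∀ t, Integrable (fun ω ↦ exp (t * X ω)) μ) (t : ℝ) :
    HasSum (fun n : ℕ ↦ t ^ n / n ! * ∫ ω, X ω ^ n ∂μ) (mgf X μ t) := by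
  have hX_meas : AEMeasurable X μ := aemeasurable_of_integrable_exp_mul one_ne_zero (hX 1) (hX 0)
  have hexp (ω : Ω) : HasSum (fun n : ℕ ↦ (|t| * |X ω|) ^ n / n !) (exp (|t| * |X ω|)) :=
    hasSum_exp _
  simp_rw [← integral_const_mul]
  refine hasSum_integral_of_dominated_convergence (fun n ω ↦ (|t| * |X ω|) ^ n / n !)
    (fun n ↦ by fun_prop) (fun n ↦ .of_forall fun ω ↦ ?_)
    (.of_forall fun ω ↦ (hexp ω).summable) ?_ (.of_forall fun ω ↦ ?_)
  · simp [mul_pow, div_mul_eq_mul_div]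
  · simp_rw [fun ω ↦ (hexp ω).tsum_eq]
    exact integrable_exp_abs_mul_abs (hX t) (hX (-t))
  · simpa only [mul_pow, div_mul_eq_mul_div] using hasSum_exp (t * X ω)

lemma factorial_two_mul (k : ℕ) : (2 * k)! = 2 ^ k * k ! * (2 * k - 1)‼ := by
  rw [← Nat.doubleFactorial_two_mul]
  cases k with
  | zero => rfl
  | succ k => exact Nat.factorial_eq_mul_doubleFactorial (2 * k + 1)

lemma pow_div_factorial_mul_gaussian_moment (c t : ℝ) (k : ℕ) :
    t ^ (2 * k) / (2 * k)! * ((2 * k - 1)‼ * c ^ k) = (c * t ^ 2 / 2) ^ k / k ! := by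
  have hfact : ((2 * k)! : ℝ) = 2 ^ k * k ! * (2 * k - 1)‼ := mod_cast factorial_two_mul k
  have hne : ((2 * k - 1)‼ : ℝ) ≠ 0 := mod_cast (Nat.doubleFactorial_pos _).ne'
  rw [hfact, pow_mul, div_pow, mul_pow]
  field_simp [hne]

lemma hasSubgaussianMGF_of_moments_le_gaussian {c : ℝ≥0}
    (hX : ∀ t, Integrable (fun ω ↦ exp (t * X ω)) μ)
    (hodd : ∀ k : ℕ, ∫ ω, X ω ^ (2 * k + 1) ∂μ = 0)
    (heven : ∀ k : ℕ, ∫ ω, X ω ^ (2 * k) ∂μ ≤ (2 * k - 1)‼ * (c : ℝ) ^ k) :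
    HasSubgaussianMGF X c μ where
  integrable_exp_mul := hX
  mgf_le t := by
    have hmgf : HasSum (fun k : ℕ ↦ t ^ (2 * k) / (2 * k)! * ∫ ω, X ω ^ (2 * k) ∂μ)
        (mgf X μ t) := by
      refine (Function.Injective.hasSum_iff (mul_right_injective₀ two_ne_zero) ?_).mpr
        (hasSum_mgf hX t)
      intro n hn
      obtain ⟨k, rfl⟩ : Odd n := by
        rw [← Nat.not_even_iff_odd, even_iff_exists_two_mul]
        exact fun ⟨k, hk⟩ ↦ hn ⟨k, hk.symm⟩
      rw [hodd, mul_zero]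
    refine hasSum_le (fun k ↦ ?_) hmgf (hasSum_exp (c * t ^ 2 / 2))
    rw [← pow_div_factorial_mul_gaussian_moment]
    exact mul_le_mul_of_nonneg_left (heven k)
      (div_nonneg ((even_two_mul k).pow_nonneg t) (Nat.cast_nonneg _))

end GaussianMoments

lemma integral_rpow_mul_one_sub_rpow {a b : ℝ} (ha : 0 < a) (hb : 0 < b) :
    ∫ x in (0 : ℝ)..1, x ^ (a - 1) * (1 - x) ^ (b - 1) = beta a b := by
  rw [← Complex.ofReal_inj, ← intervalIntegral.integral_ofReal]
  have hbeta : (beta a b : ℂ) = Complex.betaIntegral a b := by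
    rw [Complex.betaIntegral_eq_Gamma_mul_div _ _ (by simpa) (by simpa), beta]
    simp [← Complex.Gamma_ofReal]
  rw [hbeta, Complex.betaIntegral]
  refine intervalIntegral.integral_congr fun x hx ↦ ?_
  rw [uIcc_of_le zero_le_one] at hx
  simp only [Complex.ofReal_mul]
  rw [Complex.ofReal_cpow hx.1, Complex.ofReal_cpow (sub_nonneg.mpr hx.2)]
  push_cast
  rfl

lemma beta_self {a : ℝ} (ha : 0 < a) :
    beta a a = 2 ^ (1 - 2 * a) * (√π * Gamma a / Gamma (a + 1 / 2)) := by
  have hdup : Gamma a * Gamma (a + 1 / 2) = Gamma (2 * a) * 2 ^ (1 - 2 * a) * √π :=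
    Gamma_mul_Gamma_add_half a
  have h2a : Gamma (2 * a) ≠ 0 := (Gamma_pos_of_pos (by positivity)).ne'
  have hhalf : Gamma (a + 1 / 2) ≠ 0 := (Gamma_pos_of_pos (by positivity)).ne'
  rw [beta, ← two_mul]
  rw [mul_div_assoc', eq_div_iff hhalf, div_mul_eq_mul_div, div_eq_iff h2a]
  linear_combination Gamma a * hdup

lemma integral_one_sub_sq_rpow {a : ℝ} (ha : 0 < a) :
    ∫ t in (-1 : ℝ)..1, (1 - t ^ 2) ^ (a - 1) = √π * Gamma a / Gamma (a + 1 / 2) := by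
  have hweight : ∀ x ∈ uIcc (0 : ℝ) 1, (1 - (2 * x - 1) ^ 2) ^ (a - 1) =
      2 ^ (2 * a - 2) * (x ^ (a - 1) * (1 - x) ^ (a - 1)) := by
    intro x hx
    rw [uIcc_of_le zero_le_one] at hx
    have hx1 : 0 ≤ 1 - x := sub_nonneg.mpr hx.2
    rw [show 1 - (2 * x - 1) ^ 2 = 2 ^ (2 : ℝ) * (x * (1 - x)) by norm_num; ring,
      mul_rpow (by positivity) (mul_nonneg hx.1 hx1), mul_rpow hx.1 hx1,
      ← rpow_mul zero_le_two, mul_sub_one]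
  calc ∫ t in (-1 : ℝ)..1, (1 - t ^ 2) ^ (a - 1)
      = 2 * ∫ x in (0 : ℝ)..1, (1 - (2 * x - 1) ^ 2) ^ (a - 1) := by
        rw [intervalIntegral.integral_comp_mul_sub (fun t : ℝ ↦ (1 - t ^ 2) ^ (a - 1))
          two_ne_zero, smul_eq_mul, mul_inv_cancel_left₀ two_ne_zero]
        norm_num
    _ = 2 * (2 ^ (2 * a - 2) * beta a a) := by
        rw [intervalIntegral.integral_congr hweight, intervalIntegral.integral_const_mul,
          integral_rpow_mul_one_sub_rpow ha ha]
    _ = 2 ^ (1 : ℝ) * 2 ^ (2 * a - 2) * 2 ^ (1 - 2 * a) *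
          (√π * Gamma a / Gamma (a + 1 / 2)) := by
        rw [beta_self ha, rpow_one]
        ring
    _ = √π * Gamma a / Gamma (a + 1 / 2) := by
        rw [← rpow_add two_pos, ← rpow_add two_pos]
        ring_nf
        simp

/-- The ultraspherical (Gegenbauer) density of real dimension `δ`, which interpolates the densities
`f_d` of a sphere coordinate: `sphereCoordDensity d` is `ultrasphericalPDFReal (d : ℝ)`. -/
noncomputable def ultrasphericalPDFReal (δ t : ℝ) : ℝ :=
  Gamma (δ / 2) / (√π * Gamma ((δ - 1) / 2)) * (1 - t ^ 2) ^ ((δ - 3) / 2)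

/-- The ultraspherical distribution of real dimension `δ`. The restriction to `(-1, 1)` matters:
outside this interval `ultrasphericalPDFReal` takes the junk values of `Real.rpow`. -/
noncomputable def ultrasphericalMeasure (δ : ℝ) : Measure ℝ :=
  (volume.restrict (Ioo (-1) 1)).withDensity fun t ↦ .ofReal (ultrasphericalPDFReal δ t)

section Ultraspherical

variable {δ : ℝ}

@[fun_prop]
lemma measurable_ultrasphericalPDFReal (δ : ℝ) : Measurable (ultrasphericalPDFReal δ) := by
  unfold ultrasphericalPDFReal
  fun_prop

lemma ultrasphericalPDFReal_nonneg (hδ : 1 ≤ δ) {t : ℝ} (ht : t ^ 2 ≤ 1) :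
    0 ≤ ultrasphericalPDFReal δ t := by
  have hnum : 0 ≤ Gamma (δ / 2) := Gamma_nonneg_of_nonneg (by linarith)
  have hden : 0 ≤ Gamma ((δ - 1) / 2) := Gamma_nonneg_of_nonneg (by linarith)
  exact mul_nonneg (div_nonneg hnum (mul_nonneg (sqrt_nonneg π) hden))
    (rpow_nonneg (sub_nonneg.mpr ht) _)

lemma integral_ultrasphericalPDFReal (hδ : 1 < δ) :
    ∫ t in (-1 : ℝ)..1, ultrasphericalPDFReal δ t = 1 := by
  have hweight := integral_one_sub_sq_rpow (a := (δ - 1) / 2) (by linarith)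
  rw [show (δ - 1) / 2 - 1 = (δ - 3) / 2 by ring, show (δ - 1) / 2 + 1 / 2 = δ / 2 by ring]
    at hweight
  have h1 : Gamma (δ / 2) ≠ 0 := (Gamma_pos_of_pos (by linarith)).ne'
  have h2 : Gamma ((δ - 1) / 2) ≠ 0 := (Gamma_pos_of_pos (by linarith)).ne'
  simp only [ultrasphericalPDFReal]
  rw [intervalIntegral.integral_const_mul, hweight]
  field_simp

lemma intervalIntegrable_ultrasphericalPDFReal (hδ : 1 < δ) :
    IntervalIntegrable (ultrasphericalPDFReal δ) volume (-1) 1 :=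
  intervalIntegral.intervalIntegrable_of_integral_ne_zero <| by
    rw [integral_ultrasphericalPDFReal hδ]
    exact one_ne_zero

lemma toReal_ofReal_ultrasphericalPDFReal (hδ : 1 < δ) {t : ℝ} (ht : t ∈ Ioo (-1 : ℝ) 1) :
    (ENNReal.ofReal (ultrasphericalPDFReal δ t)).toReal = ultrasphericalPDFReal δ t :=
  ENNReal.toReal_ofReal <| ultrasphericalPDFReal_nonneg hδ.le <|
    (sq_le_one_iff_abs_le_one t).mpr (abs_le.mpr ⟨ht.1.le, ht.2.le⟩)

lemma integral_ultrasphericalMeasure (hδ : 1 < δ) (f : ℝ → ℝ) :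
    ∫ t, f t ∂ultrasphericalMeasure δ = ∫ t in (-1 : ℝ)..1, f t * ultrasphericalPDFReal δ t := by
  rw [ultrasphericalMeasure, integral_withDensity_eq_integral_toReal_smul (by fun_prop)
    (.of_forall fun _ ↦ ENNReal.ofReal_lt_top), intervalIntegral.integral_of_le (by norm_num),
    integral_Ioc_eq_integral_Ioo]
  refine setIntegral_congr_fun measurableSet_Ioo fun t ht ↦ ?_
  simp only [toReal_ofReal_ultrasphericalPDFReal hδ ht, smul_eq_mul, mul_comm]

lemma integrable_ultrasphericalMeasure_iff (hδ : 1 < δ) {f : ℝ → ℝ} :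
    Integrable f (ultrasphericalMeasure δ) ↔
      IntervalIntegrable (fun t ↦ f t * ultrasphericalPDFReal δ t) volume (-1) 1 := by
  rw [ultrasphericalMeasure, integrable_withDensity_iff (by fun_prop)
    (.of_forall fun _ ↦ ENNReal.ofReal_lt_top),
    intervalIntegrable_iff_integrableOn_Ioo_of_le (by norm_num)]
  refine integrableOn_congr_fun (fun t ht ↦ ?_) measurableSet_Ioo
  simp only [toReal_ofReal_ultrasphericalPDFReal hδ ht]

lemma integrable_ultrasphericalMeasure_of_continuousOn (hδ : 1 < δ) {f : ℝ → ℝ}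
    (hf : ContinuousOn f (Icc (-1) 1)) : Integrable f (ultrasphericalMeasure δ) := by
  rw [integrable_ultrasphericalMeasure_iff hδ]
  rw [← uIcc_of_le (by norm_num)] at hf
  exact (intervalIntegrable_ultrasphericalPDFReal hδ).continuousOn_mul hf

lemma integral_ultrasphericalMeasure_of_odd (hδ : 1 < δ) {f : ℝ → ℝ} (hf : f.Odd) :
    ∫ t, f t ∂ultrasphericalMeasure δ = 0 := by
  have hreflect := intervalIntegral.integral_comp_neg (a := -1) (b := 1)
    fun t ↦ f t * ultrasphericalPDFReal δ t
  have heven (t : ℝ) : ultrasphericalPDFReal δ (-t) = ultrasphericalPDFReal δ t := by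
    simp [ultrasphericalPDFReal]
  simp only [hf _, heven, neg_mul, neg_neg, intervalIntegral.integral_neg] at hreflect
  rw [integral_ultrasphericalMeasure hδ]
  linarith

lemma hasDerivAt_one_sub_sq_mul_ultrasphericalPDFReal (δ : ℝ) {t : ℝ} (ht : t ^ 2 ≠ 1) :
    HasDerivAt (fun x ↦ (1 - x ^ 2) * ultrasphericalPDFReal δ x)
      (-((δ - 1) * t * ultrasphericalPDFReal δ t)) t := by
  have ht' : 1 - t ^ 2 ≠ 0 := sub_ne_zero.mpr ht.symm
  have hpoly : HasDerivAt (fun x : ℝ ↦ 1 - x ^ 2) (-(2 * t)) t := by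
    simpa using (hasDerivAt_pow 2 t).const_sub 1
  have hpdf := (hpoly.rpow_const (p := (δ - 3) / 2) (.inl ht')).const_mul
    (Gamma (δ / 2) / (√π * Gamma ((δ - 1) / 2)))
  refine (hpoly.mul hpdf).congr_deriv ?_
  rw [rpow_sub_one ht', ultrasphericalPDFReal]
  field_simp
  ring

lemma continuousOn_one_sub_sq_mul_ultrasphericalPDFReal (hδ : 1 < δ) :
    ContinuousOn (fun x ↦ (1 - x ^ 2) * ultrasphericalPDFReal δ x) (Icc (-1) 1) := by
  have hrpow : Continuous fun x : ℝ ↦ (1 - x ^ 2) ^ ((δ - 3) / 2 + 1) :=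
    Continuous.rpow_const (by fun_prop) fun _ ↦ .inr (by linarith)
  refine (hrpow.const_mul (Gamma (δ / 2) / (√π * Gamma ((δ - 1) / 2)))).continuousOn.congr ?_
  intro x hx
  have hx' : 0 ≤ 1 - x ^ 2 := by nlinarith [hx.1, hx.2]
  simp only [ultrasphericalPDFReal]
  rw [rpow_add_one' hx' (by linarith)]
  ring

lemma integral_id_mul_eq_integral_one_sub_sq_mul_deriv (hδ : 1 < δ) {f f' : ℝ → ℝ}
    (hf : ContinuousOn f (Icc (-1) 1)) (hff' : ∀ t ∈ Ioo (-1 : ℝ) 1, HasDerivAt f (f' t) t)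
    (hf' : IntervalIntegrable f' volume (-1) 1) :
    (δ - 1) * ∫ t, t * f t ∂ultrasphericalMeasure δ =
      ∫ t, (1 - t ^ 2) * f' t ∂ultrasphericalMeasure δ := by
  have hle : (-1 : ℝ) ≤ 1 := by norm_num
  have hparts := intervalIntegral.integral_mul_deriv_eq_deriv_mul_of_hasDerivAt
    (a := -1) (b := 1) (u := f) (v := fun t ↦ (1 - t ^ 2) * ultrasphericalPDFReal δ t)
    (v' := fun t ↦ -((δ - 1) * t * ultrasphericalPDFReal δ t))
    (by rwa [uIcc_of_le hle])
    (by rw [uIcc_of_le hle]; exact continuousOn_one_sub_sq_mul_ultrasphericalPDFReal hδ)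
    (by simpa using hff')
    (fun t ht ↦ hasDerivAt_one_sub_sq_mul_ultrasphericalPDFReal δ ?_) hf'
    ((intervalIntegrable_ultrasphericalPDFReal hδ).continuousOn_mul (by fun_prop)).neg
  · rw [integral_ultrasphericalMeasure hδ, integral_ultrasphericalMeasure hδ,
      ← intervalIntegral.integral_const_mul]
    simp only [mul_neg, intervalIntegral.integral_neg, one_pow, even_two.neg_pow, sub_self,
      zero_mul, mul_zero, zero_sub, neg_inj] at hparts
    convert! hparts using 3 <;> ring
  · rw [min_eq_left hle, max_eq_right hle] at ht
    nlinarith [ht.1, ht.2]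

lemma integral_pow_add_two_ultrasphericalMeasure (hδ : 1 < δ) (n : ℕ) :
    (n + δ) * ∫ t, t ^ (n + 2) ∂ultrasphericalMeasure δ =
      (n + 1) * ∫ t, t ^ n ∂ultrasphericalMeasure δ := by
  have hpow (k : ℕ) : Integrable (fun t ↦ t ^ k) (ultrasphericalMeasure δ) :=
    integrable_ultrasphericalMeasure_of_continuousOn hδ (continuous_pow k).continuousOn
  have hstein := integral_id_mul_eq_integral_one_sub_sq_mul_deriv hδ
    (continuous_pow (n + 1)).continuousOn (fun t _ ↦ hasDerivAt_pow (n + 1) t)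
    (Continuous.intervalIntegrable (by fun_prop) _ _)
  have hleft (t : ℝ) : t * t ^ (n + 1) = t ^ (n + 2) := by ring
  have hright (t : ℝ) : (1 - t ^ 2) * ((n + 1 : ℕ) * t ^ (n + 1 - 1)) =
      (n + 1) * (t ^ n - t ^ (n + 2)) := by
    push_cast
    ring
  simp only [hleft, hright] at hstein
  rw [integral_const_mul, integral_sub (hpow n) (hpow (n + 2))] at hstein
  linarith

lemma integral_even_pow_ultrasphericalMeasure_le (hδ : 1 < δ) (k : ℕ) :
    ∫ t, t ^ (2 * k) ∂ultrasphericalMeasure δ ≤ (2 * k - 1)‼ * δ⁻¹ ^ k := by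
  induction k with
  | zero => simp [integral_ultrasphericalMeasure hδ, integral_ultrasphericalPDFReal hδ]
  | succ k ih =>
    have hrec := integral_pow_add_two_ultrasphericalMeasure hδ (2 * k)
    have hnonneg : 0 ≤ ∫ t, t ^ (2 * k + 2) ∂ultrasphericalMeasure δ :=
      integral_nonneg fun t ↦ Even.pow_nonneg ((even_two_mul k).add even_two) t
    push_cast at hrec
    have hδ0 : 0 < δ := by linarith
    calc ∫ t, t ^ (2 * k + 2) ∂ultrasphericalMeasure δ
        ≤ (2 * k + 1) * δ⁻¹ * ∫ t, t ^ (2 * k) ∂ultrasphericalMeasure δ := by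
          rw [mul_right_comm, ← hrec, ← div_eq_mul_inv, le_div_iff₀ hδ0]
          nlinarith [mul_nonneg (Nat.cast_nonneg (α := ℝ) k) hnonneg]
      _ ≤ (2 * k + 1) * δ⁻¹ * ((2 * k - 1)‼ * δ⁻¹ ^ k) := by gcongr
      _ = (2 * (k + 1) - 1)‼ * δ⁻¹ ^ (k + 1) := by
          rw [show 2 * (k + 1) - 1 = 2 * k + 1 by lia, Nat.doubleFactorial_add_one]
          push_cast
          ring

lemma hasSubgaussianMGF_id_ultrasphericalMeasure (hδ : 1 < δ) :
    HasSubgaussianMGF id δ⁻¹.toNNReal (ultrasphericalMeasure δ) := by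
  refine hasSubgaussianMGF_of_moments_le_gaussian
    (fun t ↦ integrable_ultrasphericalMeasure_of_continuousOn hδ (by fun_prop))
    (fun k ↦ integral_ultrasphericalMeasure_of_odd hδ fun t ↦ (odd_two_mul_add_one k).neg_pow t)
    fun k ↦ ?_
  rw [coe_toNNReal _ (by positivity)]
  exact integral_even_pow_ultrasphericalMeasure_le hδ k

lemma integral_exp_mul_ultrasphericalPDFReal_le (hδ : 1 < δ) (l : ℝ) :
    ∫ t in (-1 : ℝ)..1, exp (l * t) * ultrasphericalPDFReal δ t ≤ exp (l ^ 2 / (2 * δ)) := by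
  rw [← integral_ultrasphericalMeasure hδ fun t ↦ exp (l * t)]
  refine ((hasSubgaussianMGF_id_ultrasphericalMeasure hδ).mgf_le l).trans_eq ?_
  rw [coe_toNNReal _ (by positivity)]
  congr 1
  field_simp

end Ultraspherical

theorem pairwise_cosine_subGaussian_mgf_general {δ : ℝ} (hδ : 1 < δ) (l : ℝ)
    {Ω : Type*} [MeasurableSpace Ω] {P : Measure Ω} {X : Ω → ℝ}
    (hX : HasLaw X (ultrasphericalMeasure δ) P) :
    (∫ t in (-1 : ℝ)..1, exp (l * t) * ultrasphericalPDFReal δ t ≤ exp (l ^ 2 / (2 * δ))) ∧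
      (∫ ω, exp (l * X ω) ∂P ≤ exp (l ^ 2 / (2 * δ))) := by
  have hdensity := integral_exp_mul_ultrasphericalPDFReal_le hδ l
  refine ⟨hdensity, ?_⟩
  rw [← integral_ultrasphericalMeasure hδ fun t ↦ exp (l * t)] at hdensity
  exact (hX.integral_comp (by fun_prop)).trans_le hdensity

/-- Sub-Gaussian mgf bound for the pairwise cosine: for `d ≥ 2` and `λ ∈ ℝ`,
`∫_{-1}^{1} exp (λ t) f_d(t) dt ≤ exp (λ²/(2d))`; consequently, if `Z, Z'` are
independent random points on the unit sphere `S^{d-1}` whose inner product has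
(by rotational invariance of the uniform distribution) the density `f_d` on
`(-1, 1)`, then `E[exp (λ ⟪Z, Z'⟫)] ≤ exp (λ²/(2d))`, i.e. `⟪Z, Z'⟫` is
sub-Gaussian with parameter `1/√d`. -/
theorem pairwise_cosine_subGaussian_mgf (d : ℕ) (hd : 2 ≤ d) (l : ℝ)
    {Ω : Type*} [MeasurableSpace Ω] (P : Measure Ω) [IsProbabilityMeasure P]
    (Z Z' : Ω → EuclideanSpace ℝ (Fin d))
    (hZ : Measurable Z) (hZ' : Measurable Z')
    (hindep : IndepFun Z Z' P)
    (hZs : ∀ᵐ ω ∂P, ‖Z ω‖ = 1) (hZ's : ∀ᵐ ω ∂P, ‖Z' ω‖ = 1)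
    (hlaw : Measure.map (fun ω => ⟪Z ω, Z' ω⟫) P =
      (volume.restrict (Set.Ioo (-1 : ℝ) 1)).withDensity
        (fun t => ENNReal.ofReal (sphereCoordDensity d t))) :
    (∫ t in (-1 : ℝ)..1, Real.exp (l * t) * sphereCoordDensity d t ≤
      Real.exp (l ^ 2 / (2 * d))) ∧
    (∫ ω, Real.exp (l * ⟪Z ω, Z' ω⟫) ∂P ≤ Real.exp (l ^ 2 / (2 * d))) :=
  pairwise_cosine_subGaussian_mgf_general (mod_cast hd) l ⟨(hZ.inner hZ').aemeasurable, hlaw⟩
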